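/- arXiv:2006.09170 — 2 statements merged into one kernel-verified Lean document; each statement's English description precedes it below -/
import Mathlib

section
/- Overdamping criterion via standard triples (Mahajan–Tisseur): Let M, D, K ∈ ℝ^{n×n} be symmetric with M invertible, let S ∈ ℝ^{2n×2n} be symmetric and invertible with S Z = Zᵀ S, let X ∈ ℝ^{n×2n}, Z ∈ ℝ^{2n×2n}, and suppose (X, Z, S⁻¹Xᵀ) is a standard triple generating L(s) = s²M + sD + K. Then the following are equivalent: (i) every eigenvalue of Z (over ℂ) is real and negative, every eigenvector v ∈ ℂ^{2n} of Z satisfies v* S v ≠ 0, and whenever v, w ∈ ℂ^{2n} are eigenvectors of Z at eigenvalues λ, μ with v* S v < 0 and w* S w > 0, then λ < μ; (ii) M, D, K are positive definite and (v*Dv)² > 4(v*Mv)(v*Kv) for every nonzero v ∈ ℂ^n (the system is overdamped). -/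
/-!
Put `a = Xv`, `b = XZv`. Since `[X; XZ]` is invertible, `(a, b)` are coordinates on `ℂ²ⁿ`, and
`std_triple_S` shows that in them `S` becomes `[D M; M 0]`. An eigenpair `Zv = λv` corresponds to
`a ≠ 0`, `b = λa`, `L(λ)a = 0`, and for real `λ` one has `v* S v = a* L'(λ) a`.

(i) ⇒ (ii). Condition (i) forces `Z` to be diagonalizable with `S`-orthogonal eigenspaces. Choose
`γ < 0` above all eigenvalues of negative type and below all those of positive type. Then
`S(Z - γ)` is positive definite and `S(Z - γ)Z` is negative definite (`exists_gap`). In the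
coordinates `(a, b)` these are `[-γD-K, -γM; -γM, M]` and `[γK, -K; -K, -D-γM]`. The vectors
`(0, b)` and `(a, 0)` give `M, D, K > 0`, and `(a, γa)` gives `a* L(γ) a < 0`, so the quadratic
`s ↦ a* L(s) a` has positive discriminant.

(ii) ⇒ (i). The eigenvalue `λ` is a root of the real quadratic `a* L(s) a`, hence real and negative
with `a* L'(λ) a ≠ 0` (`overdamped_root`). If `λ` is of negative type at `x`, `μ` of positive type
at `y` and `μ ≤ λ`, then `L(λ)` is nonnegative along the segment from `x` to `±y` for a suitable
sign, while `L'(λ)` changes sign on it; the discriminant condition excludes this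
(`no_sign_change`).
-/

open Matrix
open scoped ComplexOrder

/-- `(X, Z, Y)` is a standard triple: the stacked matrix `[X; XZ]` is invertible and
`[X; XZ] · Y = [0; M₀⁻¹]` for some invertible `M₀`. -/
def IsStdTriple {n : ℕ}
    (X : Matrix (Fin n) (Fin n ⊕ Fin n) ℝ)
    (Z : Matrix (Fin n ⊕ Fin n) (Fin n ⊕ Fin n) ℝ)
    (Y : Matrix (Fin n ⊕ Fin n) (Fin n) ℝ) : Prop :=
  IsUnit (fromRows X (X * Z)) ∧
    ∃ M₀ : Matrix (Fin n) (Fin n) ℝ, IsUnit M₀ ∧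
      fromRows X (X * Z) * Y = fromRows 0 M₀⁻¹

/-- The standard triple `(X, Z, Y)` generates the quadratic matrix polynomial
`L(s) = s²M + sD + K`: `M = (XZY)⁻¹` and `M X Z² + D X Z + K X = 0`. -/
def GeneratesQuadPoly {n : ℕ}
    (M D K : Matrix (Fin n) (Fin n) ℝ)
    (X : Matrix (Fin n) (Fin n ⊕ Fin n) ℝ)
    (Z : Matrix (Fin n ⊕ Fin n) (Fin n ⊕ Fin n) ℝ)
    (Y : Matrix (Fin n ⊕ Fin n) (Fin n) ℝ) : Prop :=
  M = (X * Z * Y)⁻¹ ∧ M * X * (Z * Z) + D * X * Z + K * X = 0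

/-! ### Sesquilinear forms of complex matrices -/

/-- The sesquilinear form `v* A w` of a complex matrix `A`. -/
noncomputable def sform {m : Type*} [Fintype m] (A : Matrix m m ℂ) (v w : m → ℂ) : ℂ :=
  star v ⬝ᵥ A *ᵥ w

section Form

variable {m : Type*} [Fintype m]

lemma sform_add_right (A : Matrix m m ℂ) (u v w : m → ℂ) :
    sform A u (v + w) = sform A u v + sform A u w := by
  simp [sform, mulVec_add]

lemma sform_add_left (A : Matrix m m ℂ) (u v w : m → ℂ) :
    sform A (u + v) w = sform A u w + sform A v w := by
  simp [sform, add_dotProduct]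

lemma sform_smul_right (A : Matrix m m ℂ) (c : ℂ) (v w : m → ℂ) :
    sform A v (c • w) = c * sform A v w := by
  simp [sform, mulVec_smul]

lemma sform_smul_left (A : Matrix m m ℂ) (c : ℂ) (v w : m → ℂ) :
    sform A (c • v) w = star c * sform A v w := by
  simp [sform]

lemma sform_sum_right {ι : Type*} (A : Matrix m m ℂ) (v : m → ℂ) (s : Finset ι)
    (f : ι → m → ℂ) : sform A v (∑ i ∈ s, f i) = ∑ i ∈ s, sform A v (f i) := by
  simp [sform, mulVec_sum, dotProduct_sum]

lemma sform_sum_left {ι : Type*} (A : Matrix m m ℂ) (w : m → ℂ) (s : Finset ι)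
    (f : ι → m → ℂ) : sform A (∑ i ∈ s, f i) w = ∑ i ∈ s, sform A (f i) w := by
  simp [sform, sum_dotProduct]

lemma sform_conj {A : Matrix m m ℂ} (hA : Aᴴ = A) (v w : m → ℂ) :
    star (sform A v w) = sform A w v := by
  rw [sform, sform, star_dotProduct, star_mulVec, hA, dotProduct_mulVec, star_star]

lemma sform_self_im {A : Matrix m m ℂ} (hA : Aᴴ = A) (v : m → ℂ) : (sform A v v).im = 0 :=
  Complex.conj_eq_iff_im.mp (sform_conj hA v v)

lemma sform_adjoint {S Z : Matrix m m ℂ} (hSZ : S * Z = Zᴴ * S) (v w : m → ℂ) :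
    sform S (Z *ᵥ v) w = sform S v (Z *ᵥ w) := by
  rw [sform, sform, star_mulVec, mulVec_mulVec, hSZ, ← mulVec_mulVec, dotProduct_mulVec]
  simp [dotProduct_mulVec]

/-- For a matrix with real entries, the form at `x + iy` is the sum of the real forms at `x`
and `y`. -/
lemma sform_map_re {A : Matrix m m ℝ} (v : m → ℂ) :
    (sform (A.map Complex.ofReal) v v).re =
      (fun i => (v i).re) ⬝ᵥ A *ᵥ (fun i => (v i).re) +
      (fun i => (v i).im) ⬝ᵥ A *ᵥ (fun i => (v i).im) := by
  simp [sform, dotProduct, mulVec, Complex.re_sum, Complex.im_sum, Finset.sum_add_distrib]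

lemma sform_map_ofReal {A : Matrix m m ℝ} (x : m → ℝ) :
    (sform (A.map Complex.ofReal) (fun i => (x i : ℂ)) (fun i => (x i : ℂ))).re =
      x ⬝ᵥ A *ᵥ x := by
  rw [sform_map_re]; simp [dotProduct]

lemma sform_map_pos {A : Matrix m m ℝ} (hA : A.PosDef) {v : m → ℂ} (hv : v ≠ 0) :
    0 < (sform (A.map Complex.ofReal) v v).re := by
  have key : ∀ x : m → ℝ, x ≠ 0 → 0 < x ⬝ᵥ A *ᵥ x := fun x hx => by
    simpa using hA.dotProduct_mulVec_pos hx
  have key' : ∀ x : m → ℝ, 0 ≤ x ⬝ᵥ A *ᵥ x := fun x => by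
    simpa using hA.posSemidef.dotProduct_mulVec_nonneg x
  rw [sform_map_re]
  by_cases h : (fun i => (v i).re) = 0
  · have h' : (fun i => (v i).im) ≠ 0 := fun h' => hv <| funext fun i =>
      Complex.ext (congrFun h i) (congrFun h' i)
    exact add_pos_of_nonneg_of_pos (key' _) (key _ h')
  · exact add_pos_of_pos_of_nonneg (key _ h) (key' _)

lemma posDef_of_sform_pos {A : Matrix m m ℝ} (hA : Aᵀ = A)
    (h : ∀ v : m → ℂ, v ≠ 0 → 0 < (sform (A.map Complex.ofReal) v v).re) : A.PosDef := by
  refine .of_dotProduct_mulVec_pos (by simpa [IsHermitian, conjTranspose_eq_transpose_of_trivial] using hA) fun x hx => ?_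
  have := h (fun i => (x i : ℂ)) fun h0 => hx <| funext fun i => by
    simpa using congrFun h0 i
  rw [sform_map_ofReal] at this
  simpa using this

lemma sform_combo_re {A : Matrix m m ℂ} (hA : Aᴴ = A) (s t : ℝ) (x y : m → ℂ) :
    (sform A ((s : ℂ) • x + (t : ℂ) • y) ((s : ℂ) • x + (t : ℂ) • y)).re =
      s ^ 2 * (sform A x x).re + 2 * (s * t) * (sform A x y).re + t ^ 2 * (sform A y y).re := by
  have h : (sform A y x).re = (sform A x y).re := by rw [← sform_conj hA x y]; simp
  simp only [sform_add_left, sform_add_right, sform_smul_left, sform_smul_right]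
  simp [h]; ring

end Form

/-! ### Eigenvectors without neutral directions -/

section Spectral

variable {m : Type*} [Fintype m] [DecidableEq m]

/-- Every vector is a sum of eigenvectors of `Z` at distinct eigenvalues (indexed by the support of
`f`; off the support `f l = 0`). Without neutral eigenvectors `Z` has no Jordan chain of length two: if `(Z - l) w = v` is an
eigenvector, then `v* S v = v* S (Z - l) w = 0`. -/
lemma exists_eigen_decomp {S Z : Matrix m m ℂ} (hSZ : S * Z = Zᴴ * S)
    (h1 : ∀ (l : ℂ) (v : m → ℂ), v ≠ 0 → Z *ᵥ v = l • v → l < 0)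
    (h2 : ∀ (l : ℂ) (v : m → ℂ), v ≠ 0 → Z *ᵥ v = l • v → sform S v v ≠ 0) (v : m → ℂ) :
    ∃ f : ℂ →₀ (m → ℂ), (∀ l, Z *ᵥ f l = l • f l) ∧ ∑ l ∈ f.support, f l = v := by
  have key : ∀ (l : ℂ) (w : m → ℂ), w ∈ Module.End.maxGenEigenspace (toLin' Z) l → Z *ᵥ w = l • w := by
    intro l w hw
    obtain ⟨k, hk⟩ := (Module.End.mem_maxGenEigenspace _ _ _).1 hw
    set g := toLin' Z - l • (1 : Module.End ℂ (m → ℂ)) with hg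
    have hgv : ∀ u, g u = Z *ᵥ u - l • u := fun u => by simp [hg]
    have step : ∀ u, g (g u) = 0 → g u = 0 := by
      intro u hu
      by_contra hne
      have hZ : Z *ᵥ g u = l • g u := sub_eq_zero.1 ((hgv _).symm.trans hu)
      have hl := (Complex.neg_iff.1 (h1 l _ hne hZ)).2
      have hl' : star l = l := Complex.conj_eq_iff_im.2 hl
      refine h2 l _ hne hZ ?_
      nth_rewrite 2 [hgv]
      rw [sub_eq_add_neg, ← neg_smul, sform_add_right, ← sform_adjoint hSZ, hZ, sform_smul_left,
        sform_smul_right, hl']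
      ring
    have : ∀ k, ∀ u, (g ^ k) u = 0 → g u = 0 := by
      intro k
      induction k with
      | zero => intro u hu; simp at hu; simp [hu]
      | succ k ih =>
        intro u hu
        rw [pow_succ, Module.End.mul_apply] at hu
        exact step u (ih _ hu)
    exact sub_eq_zero.1 ((hgv _).symm.trans (this k w hk))
  have hv : v ∈ ⨆ l, Module.End.maxGenEigenspace (toLin' Z) l := by
    rw [Module.End.iSup_maxGenEigenspace_eq_top]; trivial
  obtain ⟨f, hf, hsum⟩ := (Submodule.mem_iSup_iff_exists_finsupp _ _).1 hv
  exact ⟨f, fun l => key l _ (hf l), hsum⟩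

/-- A shift `γ < 0` separating the eigenvalues of negative type from those of positive type makes
`S (Z - γ)` positive definite and `S (Z - γ) Z` negative definite, since both forms are diagonal
in an `S`-orthogonal eigenbasis of `Z`. -/
lemma exists_gap {S Z : Matrix m m ℂ} (hS : Sᴴ = S) (hSZ : S * Z = Zᴴ * S)
    (h1 : ∀ (l : ℂ) (v : m → ℂ), v ≠ 0 → Z *ᵥ v = l • v → l < 0)
    (h2 : ∀ (l : ℂ) (v : m → ℂ), v ≠ 0 → Z *ᵥ v = l • v → sform S v v ≠ 0)
    (h3 : ∀ (l μ : ℂ) (v w : m → ℂ), v ≠ 0 → w ≠ 0 → Z *ᵥ v = l • v → Z *ᵥ w = μ • w →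
      sform S v v < 0 → 0 < sform S w w → l < μ) :
    ∃ γ : ℝ, γ < 0 ∧ ∀ v : m → ℂ, v ≠ 0 →
      0 < (sform S v (Z *ᵥ v)).re - γ * (sform S v v).re ∧
      (sform S v (Z *ᵥ (Z *ᵥ v))).re - γ * (sform S v (Z *ᵥ v)).re < 0 := by
  classical
  have hfin : Set.Finite {l : ℂ | ∃ v : m → ℂ, v ≠ 0 ∧ Z *ᵥ v = l • v} := by
    refine (Module.End.finite_hasEigenvalue (toLin' Z)).subset ?_
    rintro l ⟨v, hv, hZ⟩
    exact Module.End.hasEigenvalue_of_hasEigenvector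
      (Module.End.hasEigenvector_iff.2 ⟨Module.End.mem_eigenspace_iff.2 (by simpa using hZ), hv⟩)
  let N : Set ℝ := {r | ∃ v : m → ℂ, v ≠ 0 ∧ Z *ᵥ v = (r : ℂ) • v ∧ sform S v v < 0}
  let P : Set ℝ := {r | ∃ v : m → ℂ, v ≠ 0 ∧ Z *ᵥ v = (r : ℂ) • v ∧ 0 < sform S v v}
  have hfinR : Set.Finite {r : ℝ | ∃ v : m → ℂ, v ≠ 0 ∧ Z *ᵥ v = (r : ℂ) • v} :=
    Set.Finite.preimage (f := Complex.ofReal) Complex.ofReal_injective.injOn hfin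
  have hN : N.Finite := hfinR.subset fun r ⟨v, hv, hZ, _⟩ => ⟨v, hv, hZ⟩
  have hP : P.Finite := hfinR.subset fun r ⟨v, hv, hZ, _⟩ => ⟨v, hv, hZ⟩
  obtain ⟨γ, hγN, hγP⟩ := Order.exists_between_finsets hN.toFinset (insert 0 hP.toFinset) (by
    intro a ha b hb
    obtain ⟨v, hv, hZ, hneg⟩ := hN.mem_toFinset.1 ha
    rcases Finset.mem_insert.1 hb with rfl | hb
    · simpa using (Complex.neg_iff.1 (h1 _ v hv hZ)).1
    · obtain ⟨w, hw, hZw, hpos⟩ := hP.mem_toFinset.1 hb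
      exact Complex.real_lt_real.1 (h3 _ _ v w hv hw hZ hZw hneg hpos))
  refine ⟨γ, hγP 0 (by simp), fun v hv => ?_⟩
  have him : ∀ (l : ℂ) (u : m → ℂ), u ≠ 0 → Z *ᵥ u = l • u → (l.re : ℂ) = l := fun l u hu hZ =>
    Complex.ext (by simp) (by simpa using (Complex.neg_iff.1 (h1 l u hu hZ)).2.symm)
  have hterm : ∀ (l : ℂ) (u : m → ℂ), u ≠ 0 → Z *ᵥ u = l • u →
      0 < (l.re - γ) * (sform S u u).re := by
    intro l u hu hZ
    have hl := him l u hu hZ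
    have hre : (sform S u u).re ≠ 0 := fun h =>
      h2 l u hu hZ (Complex.ext h (sform_self_im hS u))
    rcases lt_or_gt_of_ne hre with h | h
    · have : l.re < γ := hγN _ (hN.mem_toFinset.2
        ⟨u, hu, by rw [hl, hZ], Complex.neg_iff.2 ⟨h, sform_self_im hS u⟩⟩)
      exact mul_pos_of_neg_of_neg (by linarith) h
    · have : γ < l.re := hγP _ (Finset.mem_insert_of_mem (hP.mem_toFinset.2
        ⟨u, hu, by rw [hl, hZ], Complex.pos_iff.2 ⟨h, (sform_self_im hS u).symm⟩⟩))
      exact mul_pos (by linarith) h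
  obtain ⟨f, hf, hsum⟩ := exists_eigen_decomp hSZ h1 h2 v
  have horth : ∀ l ∈ f.support, ∀ l' ∈ f.support, l ≠ l' → sform S (f l) (f l') = 0 := by
    intro l hl l' hl' hne
    have h := sform_adjoint hSZ (f l) (f l')
    have hstar : star l = l := Complex.conj_eq_iff_im.2
      (Complex.neg_iff.1 (h1 l _ (Finsupp.mem_support_iff.1 hl) (hf l))).2
    rw [hf, hf, sform_smul_left, sform_smul_right, hstar] at h
    have : (l - l') * sform S (f l) (f l') = 0 := by rw [sub_mul, h, sub_self]
    exact (mul_eq_zero.1 this).resolve_left (sub_ne_zero.2 hne)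
  have hdiag : ∀ c : ℂ → ℂ, sform S v (∑ l ∈ f.support, c l • f l) =
      ∑ l ∈ f.support, c l * sform S (f l) (f l) := by
    intro c
    rw [sform_sum_right]
    refine Finset.sum_congr rfl fun l hl => ?_
    rw [sform_smul_right, ← hsum, sform_sum_left, Finset.sum_eq_single l]
    · intro l' hl' hne; exact horth l' hl' l hl hne
    · intro h; exact absurd hl h
  have hv0 : v = ∑ l ∈ f.support, (1 : ℂ) • f l := by simp [hsum]
  have hv1 : Z *ᵥ v = ∑ l ∈ f.support, l • f l := by
    rw [← hsum, mulVec_sum]; exact Finset.sum_congr rfl fun l _ => hf l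
  have hv2 : Z *ᵥ (Z *ᵥ v) = ∑ l ∈ f.support, (l * l) • f l := by
    rw [hv1, mulVec_sum]
    exact Finset.sum_congr rfl fun l _ => by rw [mulVec_smul, hf, smul_smul]
  have hne : f.support.Nonempty := by
    rw [Finset.nonempty_iff_ne_empty]; intro h; apply hv; rw [← hsum, h]; simp
  have e0 := hdiag fun _ => 1
  rw [← hv0] at e0
  have e1 := hdiag fun l => l
  rw [← hv1] at e1
  have e2 := hdiag fun l => l * l
  rw [← hv2] at e2
  rw [e0, e1, e2]
  simp only [Complex.re_sum, Finset.mul_sum, ← Finset.sum_sub_distrib]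
  have hre : ∀ l ∈ f.support, f l ≠ 0 ∧ l.re < 0 ∧ l.im = 0 := fun l hl =>
    ⟨Finsupp.mem_support_iff.1 hl,
      Complex.neg_iff.1 (h1 l _ (Finsupp.mem_support_iff.1 hl) (hf l))⟩
  constructor
  · refine Finset.sum_pos (fun l hl => ?_) hne
    obtain ⟨h0, hneg, him0⟩ := hre l hl
    have := hterm l _ h0 (hf l)
    simp only [Complex.mul_re, him0, one_mul]
    linarith
  · refine Finset.sum_neg (fun l hl => ?_) hne
    obtain ⟨h0, hneg, him0⟩ := hre l hl
    have := mul_neg_of_neg_of_pos hneg (hterm l _ h0 (hf l))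
    simp only [Complex.mul_re, Complex.mul_im, him0]
    linarith

end Spectral

/-! ### The form `S` in the coordinates of the standard triple -/

section Triple

/-- In the coordinates `[X; XZ]` the form `S` becomes `[D M; M 0]`. -/
lemma std_triple_S {n : ℕ} {M D K : Matrix (Fin n) (Fin n) ℝ} (hM : IsUnit M)
    {S : Matrix (Fin n ⊕ Fin n) (Fin n ⊕ Fin n) ℝ} (hSinv : IsUnit S)
    {X : Matrix (Fin n) (Fin n ⊕ Fin n) ℝ} {Z : Matrix (Fin n ⊕ Fin n) (Fin n ⊕ Fin n) ℝ}
    (hSZ : S * Z = Zᵀ * S) (htriple : IsStdTriple X Z (S⁻¹ * Xᵀ))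
    (hgen : GeneratesQuadPoly M D K X Z (S⁻¹ * Xᵀ)) :
    S = Xᵀ * D * X + Xᵀ * M * (X * Z) + (X * Z)ᵀ * M * X := by
  obtain ⟨hT, M₀, hM₀, hY⟩ := htriple
  obtain ⟨hMeq, hL⟩ := hgen
  have hSdet := (isUnit_iff_isUnit_det S).1 hSinv
  have hMdet := (isUnit_iff_isUnit_det M).1 hM
  set Y := S⁻¹ * Xᵀ with hYdef
  rw [fromRows_mul, fromRows_inj.eq_iff] at hY
  obtain ⟨hXY, hXZY⟩ := hY
  have hMM₀ : M = M₀ := by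
    rw [hMeq, hXZY, nonsing_inv_nonsing_inv _ ((isUnit_iff_isUnit_det _).1 hM₀)]
  rw [← hMM₀] at hXZY
  set E := Xᵀ * D * X + Xᵀ * M * (X * Z) + (X * Z)ᵀ * M * X with hE
  have hZS : S⁻¹ * Zᵀ = Z * S⁻¹ := by
    calc S⁻¹ * Zᵀ = S⁻¹ * (Zᵀ * S) * S⁻¹ := by
          rw [Matrix.mul_assoc, Matrix.mul_assoc, mul_nonsing_inv _ hSdet, Matrix.mul_one]
      _ = Z * S⁻¹ := by rw [← hSZ, ← Matrix.mul_assoc S⁻¹, nonsing_inv_mul _ hSdet, Matrix.one_mul]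
  have hMinv : M * M⁻¹ = 1 := mul_nonsing_inv _ hMdet
  have h1 : E * (S⁻¹ * Xᵀ) = Xᵀ := by
    rw [← hYdef, hE]
    simp only [Matrix.add_mul, Matrix.mul_assoc] at hXZY ⊢
    rw [hXY, hXZY, hMinv]; simp
  have h2 : E * (S⁻¹ * (X * Z)ᵀ) = (X * Z)ᵀ := by
    have e : S⁻¹ * (X * Z)ᵀ = Z * Y := by
      rw [transpose_mul, ← Matrix.mul_assoc, hZS, Matrix.mul_assoc]
    have hL' : M * (X * (Z * (Z * Y))) = - (D * M⁻¹) := by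
      have := congrArg (· * Y) hL
      simp only [Matrix.add_mul, Matrix.mul_assoc, Matrix.zero_mul] at this hXZY
      rw [hXY, hXZY, Matrix.mul_zero, add_zero] at this
      exact eq_neg_of_add_eq_zero_left this
    rw [e, hE]
    simp only [Matrix.add_mul, Matrix.mul_assoc] at hXZY ⊢
    rw [hL', hXZY, hMinv]; simp
  have h3 : E * S⁻¹ * (fromRows X (X * Z))ᵀ = 1 * (fromRows X (X * Z))ᵀ := by
    rw [transpose_fromRows, mul_fromCols, Matrix.mul_assoc, Matrix.mul_assoc, h1, h2,
      Matrix.one_mul]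
  have hTt : IsUnit (fromRows X (X * Z))ᵀ := (isUnit_transpose _).2 hT
  have h4 : E * S⁻¹ = 1 := hTt.mul_right_cancel h3
  calc S = E * S⁻¹ * S := by rw [h4, Matrix.one_mul]
    _ = E := by rw [Matrix.mul_assoc, nonsing_inv_mul _ hSdet, Matrix.mul_one]

lemma sform_conjTranspose_mul_mul {p m : Type*} [Fintype p] [Fintype m] (P Q : Matrix p m ℂ)
    (A : Matrix p p ℂ) (v w : m → ℂ) :
    sform (Pᴴ * A * Q) v w = sform A (P *ᵥ v) (Q *ᵥ w) := by
  rw [sform, sform, star_mulVec, ← mulVec_mulVec, ← mulVec_mulVec, dotProduct_mulVec (star v)]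

end Triple

/-! ### Overdamped quadratic polynomials -/

section Overdamped

variable {p m : Type*} [Fintype p] [Fintype m]

/-- If `f(z) = z* L(r) z ≥ 0`, then `(z* L'(r) z)² = 4 (z*Mz) f(z) + (z*Dz)² - 4 (z*Mz)(z*Kz)` is
positive. So `z* L'(r) z` cannot change sign along a segment on which `f ≥ 0`. -/
lemma no_sign_change {M D K : Matrix p p ℂ} (hM : Mᴴ = M) (hD : Dᴴ = D) (hK : Kᴴ = K)
    (hMpos : ∀ v : p → ℂ, v ≠ 0 → 0 < (sform M v v).re)
    (hdisc : ∀ v : p → ℂ, v ≠ 0 →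
      4 * ((sform M v v).re * (sform K v v).re) < (sform D v v).re ^ 2)
    (r : ℝ) (x y : p → ℂ)
    (hfx : 0 ≤ r ^ 2 * (sform M x x).re + r * (sform D x x).re + (sform K x x).re)
    (hfy : 0 ≤ r ^ 2 * (sform M y y).re + r * (sform D y y).re + (sform K y y).re)
    (hxy : 0 ≤ r ^ 2 * (sform M x y).re + r * (sform D x y).re + (sform K x y).re)
    (hgx : 2 * r * (sform M x x).re + (sform D x x).re < 0)
    (hgy : 0 < 2 * r * (sform M y y).re + (sform D y y).re) : False := by
  let z : ℝ → p → ℂ := fun t => ((1 - t : ℝ) : ℂ) • x + (t : ℂ) • y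
  let h : ℝ → ℝ := fun t => 2 * r * (sform M (z t) (z t)).re + (sform D (z t) (z t)).re
  have hcont : Continuous h := by
    simp only [h, z, sform_combo_re hM, sform_combo_re hD]
    fun_prop
  have h0 : h 0 < 0 := by simpa [h, z] using hgx
  have h1 : 0 < h 1 := by simpa [h, z] using hgy
  obtain ⟨t, ⟨ht0, ht1⟩, ht⟩ :=
    intermediate_value_Icc (zero_le_one' ℝ) hcont.continuousOn ⟨h0.le, h1.le⟩
  have hz : z t ≠ 0 := by
    intro hz
    have e : ((1 - t : ℝ) : ℂ) • x + ((0 : ℝ) : ℂ) • y =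
        ((0 : ℝ) : ℂ) • x + ((-t : ℝ) : ℂ) • y := by
      have := eq_neg_of_add_eq_zero_left hz
      simp only [Complex.ofReal_zero, zero_smul, add_zero, zero_add, this, Complex.ofReal_neg,
        neg_smul]
    have eM := sform_combo_re hM (1 - t) 0 x y
    have eD := sform_combo_re hD (1 - t) 0 x y
    rw [e, sform_combo_re hM] at eM
    rw [e, sform_combo_re hD] at eD
    have key : (1 - t) ^ 2 * (2 * r * (sform M x x).re + (sform D x x).re) =
        t ^ 2 * (2 * r * (sform M y y).re + (sform D y y).re) := by
      linear_combination -2 * r * eM - eD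
    have l1 : (1 - t) ^ 2 * (2 * r * (sform M x x).re + (sform D x x).re) ≤ 0 :=
      mul_nonpos_of_nonneg_of_nonpos (sq_nonneg _) hgx.le
    have l2 : 0 ≤ t ^ 2 * (2 * r * (sform M y y).re + (sform D y y).re) :=
      mul_nonneg (sq_nonneg _) hgy.le
    have l3 : (1 - t) ^ 2 * (2 * r * (sform M x x).re + (sform D x x).re) = 0 := by linarith
    have l4 : t ^ 2 * (2 * r * (sform M y y).re + (sform D y y).re) = 0 := by linarith
    have l5 := (mul_eq_zero.1 l3).resolve_right hgx.ne
    have l6 := (mul_eq_zero.1 l4).resolve_right hgy.ne'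
    have l7 : 1 - t = 0 := by simpa using l5
    have l8 : t = 0 := by simpa using l6
    linarith
  have hf : 0 ≤ r ^ 2 * (sform M (z t) (z t)).re + r * (sform D (z t) (z t)).re
      + (sform K (z t) (z t)).re := by
    simp only [z, sform_combo_re hM, sform_combo_re hD, sform_combo_re hK]
    have q1 := mul_nonneg (sq_nonneg (1 - t)) hfx
    have q2 := mul_nonneg (sq_nonneg t) hfy
    have q3 := mul_nonneg (mul_nonneg zero_le_two (mul_nonneg (sub_nonneg.2 ht1) ht0)) hxy
    linarith
  have hd := hdisc _ hz
  have hm := mul_nonneg (hMpos _ hz).le hf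
  have hg : 2 * r * (sform M (z t) (z t)).re + (sform D (z t) (z t)).re = 0 := ht
  generalize (sform M (z t) (z t)).re = a at *
  generalize (sform D (z t) (z t)).re = b at *
  generalize (sform K (z t) (z t)).re = c at *
  have : b = - (2 * r * a) := by linarith
  subst this
  nlinarith

/-- A root `l` of `a s² + b s + c` with positive coefficients and positive discriminant is real and
negative, and the derivative `2 l a + b` does not vanish there. This is applied to the scalar
quadratic `s ↦ x* L(s) x`. -/
lemma overdamped_root {a b c : ℝ} (ha : 0 < a) (hb : 0 < b) (hc : 0 < c)
    (hd : 4 * (a * c) < b ^ 2) {l : ℂ} (h : l ^ 2 * a + l * b + c = 0) :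
    l < 0 ∧ l.re ^ 2 * a + l.re * b + c = 0 ∧ 2 * l.re * a + b ≠ 0 := by
  have hre := congrArg Complex.re h
  have him := congrArg Complex.im h
  simp [pow_two] at hre him
  have him' : l.im * (2 * l.re * a + b) = 0 := by linarith
  have hl : l.im = 0 := by
    by_contra hne
    have hb' := (mul_eq_zero.1 him').resolve_left hne
    have hb2 : b = - (2 * l.re * a) := by linarith
    have : 0 ≤ a ^ 2 * l.im ^ 2 := by positivity
    subst hb2
    nlinarith
  rw [hl] at hre
  refine ⟨Complex.neg_iff.2 ⟨?_, hl⟩, by linarith, fun h0 => ?_⟩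
  · by_contra! hn
    have : 0 ≤ l.re * l.re * a := by positivity
    have : 0 ≤ l.re * b := by positivity
    linarith
  · have hb2 : b = - (2 * l.re * a) := by linarith
    subst hb2
    nlinarith

end Overdamped

/-! ### The criterion -/

/-- **Overdamping criterion via standard triples (Mahajan–Tisseur).** -/
theorem overdamping_criterion_std_triple {n : ℕ}
    (M D K : Matrix (Fin n) (Fin n) ℝ)
    (hMsym : Mᵀ = M) (hDsym : Dᵀ = D) (hKsym : Kᵀ = K) (hM : IsUnit M)
    (S : Matrix (Fin n ⊕ Fin n) (Fin n ⊕ Fin n) ℝ)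
    (hSsym : Sᵀ = S) (hSinv : IsUnit S)
    (X : Matrix (Fin n) (Fin n ⊕ Fin n) ℝ)
    (Z : Matrix (Fin n ⊕ Fin n) (Fin n ⊕ Fin n) ℝ)
    (hSZ : S * Z = Zᵀ * S)
    (htriple : IsStdTriple X Z (S⁻¹ * Xᵀ))
    (hgen : GeneratesQuadPoly M D K X Z (S⁻¹ * Xᵀ)) :
    -- (i): real negative eigenvalues, nondegenerate sign, and sign separation
    ((∀ lam : ℂ, (∃ v : Fin n ⊕ Fin n → ℂ, v ≠ 0 ∧
        (Z.map Complex.ofReal).mulVec v = lam • v) → lam < 0) ∧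
     (∀ v : Fin n ⊕ Fin n → ℂ, v ≠ 0 →
        (∃ lam : ℂ, (Z.map Complex.ofReal).mulVec v = lam • v) →
        star v ⬝ᵥ (S.map Complex.ofReal).mulVec v ≠ 0) ∧
     (∀ (lam μ : ℂ) (v w : Fin n ⊕ Fin n → ℂ), v ≠ 0 → w ≠ 0 →
        (Z.map Complex.ofReal).mulVec v = lam • v →
        (Z.map Complex.ofReal).mulVec w = μ • w →
        star v ⬝ᵥ (S.map Complex.ofReal).mulVec v < 0 →
        0 < star w ⬝ᵥ (S.map Complex.ofReal).mulVec w →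
        lam < μ))
    ↔
    -- (ii): M, D, K positive definite and the overdamping condition
    (M.PosDef ∧ D.PosDef ∧ K.PosDef ∧
     ∀ v : Fin n → ℂ, v ≠ 0 →
        4 * ((star v ⬝ᵥ (M.map Complex.ofReal).mulVec v) *
             (star v ⬝ᵥ (K.map Complex.ofReal).mulVec v)) <
          (star v ⬝ᵥ (D.map Complex.ofReal).mulVec v) ^ 2) := by
  set Mc := M.map Complex.ofReal with hMc
  set Dc := D.map Complex.ofReal with hDc
  set Kc := K.map Complex.ofReal with hKc
  set Sc := S.map Complex.ofReal with hSc
  set Zc := Z.map Complex.ofReal with hZc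
  set Xc := X.map Complex.ofReal with hXc
  have hH : ∀ {m : Type} (A : Matrix m m ℝ), Aᵀ = A →
      (A.map Complex.ofReal)ᴴ = A.map Complex.ofReal := by
    intro m A hA
    ext i j
    simpa using congrFun (congrFun hA i) j
  have hMh : Mcᴴ = Mc := hH M hMsym
  have hDh : Dcᴴ = Dc := hH D hDsym
  have hKh : Kcᴴ = Kc := hH K hKsym
  have hSh : Scᴴ = Sc := hH S hSsym
  have hmul : ∀ {p q r : Type} [Fintype q] (A : Matrix p q ℝ) (B : Matrix q r ℝ),
      (A * B).map Complex.ofReal = A.map Complex.ofReal * B.map Complex.ofReal :=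
    fun A B => Matrix.map_mul (f := Complex.ofRealHom)
  have hadd : ∀ {p q : Type} (A B : Matrix p q ℝ),
      (A + B).map Complex.ofReal = A.map Complex.ofReal + B.map Complex.ofReal :=
    fun A B => Matrix.map_add _ Complex.ofReal_add A B
  have htr : ∀ {p q : Type} (A : Matrix p q ℝ),
      Aᵀ.map Complex.ofReal = (A.map Complex.ofReal)ᴴ := by
    intro p q A; ext i j; simp
  have hSZc : Sc * Zc = Zcᴴ * Sc := by
    rw [hSc, hZc, ← htr, ← hmul, ← hmul, hSZ]
  have hSform : ∀ v w, sform Sc v w = sform Dc (Xc *ᵥ v) (Xc *ᵥ w) +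
      sform Mc (Xc *ᵥ v) (Xc *ᵥ (Zc *ᵥ w)) + sform Mc (Xc *ᵥ (Zc *ᵥ v)) (Xc *ᵥ w) := by
    intro v w
    have h := congrArg (fun A => A.map Complex.ofReal) (std_triple_S hM hSinv hSZ htriple hgen)
    simp only [hadd, hmul, htr] at h
    have h' : Sc = Xcᴴ * Dc * Xc + Xcᴴ * Mc * (Xc * Zc) + (Xc * Zc)ᴴ * Mc * Xc := h
    rw [h']
    have hsplit : ∀ A B : Matrix (Fin n ⊕ Fin n) (Fin n ⊕ Fin n) ℂ,
        sform (A + B) v w = sform A v w + sform B v w := fun A B => by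
      simp [sform, add_mulVec]
    simp only [hsplit, sform_conjTranspose_mul_mul, mulVec_mulVec]
  have hL : ∀ v, Mc *ᵥ (Xc *ᵥ (Zc *ᵥ (Zc *ᵥ v))) + Dc *ᵥ (Xc *ᵥ (Zc *ᵥ v)) +
      Kc *ᵥ (Xc *ᵥ v) = 0 := by
    intro v
    have h := congrArg (fun A => A.map Complex.ofReal *ᵥ v) hgen.2
    simp only [hadd, hmul, add_mulVec, ← mulVec_mulVec] at h
    rw [Matrix.map_zero _ Complex.ofReal_zero, zero_mulVec] at h
    exact h
  have hLform : ∀ u v, sform Mc u (Xc *ᵥ (Zc *ᵥ (Zc *ᵥ v))) =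
      - sform Dc u (Xc *ᵥ (Zc *ᵥ v)) - sform Kc u (Xc *ᵥ v) := by
    intro u v
    have h := congrArg (fun x => star u ⬝ᵥ x) (hL v)
    simp only [dotProduct_add, dotProduct_zero] at h
    simp only [sform]
    linear_combination h
  have hT : IsUnit (fromRows Xc (Xc * Zc)) := by
    have h := htriple.1.map (Complex.ofRealHom.mapMatrix (m := Fin n ⊕ Fin n))
    have e : Complex.ofRealHom.mapMatrix (fromRows X (X * Z)) = fromRows Xc (Xc * Zc) := by
      rw [hXc, hZc, ← hmul]
      ext (i | i) j <;> rfl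
    rwa [e] at h
  have hsurj : ∀ a b : Fin n → ℂ, ∃ v, Xc *ᵥ v = a ∧ Xc *ᵥ (Zc *ᵥ v) = b := by
    intro a b
    obtain ⟨v, hv⟩ := mulVec_surjective_iff_isUnit.2 hT (Sum.elim a b)
    rw [fromRows_mulVec, Sum.elim_eq_iff] at hv
    exact ⟨v, hv.1, by rw [mulVec_mulVec]; exact hv.2⟩
  have hinj : ∀ v, Xc *ᵥ v = 0 → Xc *ᵥ (Zc *ᵥ v) = 0 → v = 0 := by
    intro v h0 h1
    apply mulVec_injective_iff_isUnit.2 hT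
    rw [mulVec_zero, fromRows_mulVec, h0, ← mulVec_mulVec, h1]
    ext (i | i) <;> rfl
  have hreal : ∀ {A : Matrix (Fin n) (Fin n) ℂ}, Aᴴ = A → ∀ v,
      sform A v v = ((sform A v v).re : ℂ) := fun hA v =>
    Complex.ext (by simp) (by simpa using sform_self_im hA v)
  -- The complex inequality of overdamping compares real numbers.
  have hdisc : ∀ v : Fin n → ℂ,
      (4 * ((star v ⬝ᵥ Mc *ᵥ v) * (star v ⬝ᵥ Kc *ᵥ v)) < (star v ⬝ᵥ Dc *ᵥ v) ^ 2 ↔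
        4 * ((sform Mc v v).re * (sform Kc v v).re) < (sform Dc v v).re ^ 2) := by
    intro v
    change 4 * (sform Mc v v * sform Kc v v) < sform Dc v v ^ 2 ↔ _
    rw [hreal hMh, hreal hKh, hreal hDh, ← Complex.real_lt_real]
    push_cast
    simp
  have hsym : ∀ {A : Matrix (Fin n) (Fin n) ℂ}, Aᴴ = A → ∀ v w,
      (sform A v w).re = (sform A w v).re := fun hA v w => by
    rw [← sform_conj hA w v]; simp
  have hz : ∀ (A : Matrix (Fin n) (Fin n) ℂ) v, sform A v 0 = 0 := fun A v => by simp [sform]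
  have hz' : ∀ (A : Matrix (Fin n) (Fin n) ℂ) v, sform A 0 v = 0 := fun A v => by simp [sform]
  constructor
  · rintro ⟨h1, h2, h3⟩
    obtain ⟨γ, hγ, hdef⟩ := exists_gap hSh hSZc (fun l v hv hZ => h1 l ⟨v, hv, hZ⟩)
      (fun l v hv hZ => h2 v hv ⟨l, hZ⟩) h3
    -- In the coordinates `a = Xv`, `b = XZv` the two definite forms are
    -- `[-γD-K, -γM; -γM, M]` and `[γK, -K; -K, -D-γM]`.
    have hab : ∀ a b : Fin n → ℂ, (a ≠ 0 ∨ b ≠ 0) →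
        0 < (sform Mc b b).re - (sform Kc a a).re
          - γ * ((sform Dc a a).re + 2 * (sform Mc a b).re) ∧
        - 2 * (sform Kc a b).re - (sform Dc b b).re
          - γ * ((sform Mc b b).re - (sform Kc a a).re) < 0 := by
      intro a b hne
      obtain ⟨v, hva, hvb⟩ := hsurj a b
      have hv : v ≠ 0 := by
        rintro rfl
        simp only [mulVec_zero] at hva hvb
        rcases hne with h | h
        · exact h hva.symm
        · exact h hvb.symm
      have key := hdef v hv
      simp only [hSform, hLform, hva, hvb] at key
      simp only [Complex.add_re, Complex.sub_re, Complex.neg_re] at key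
      rw [← hsym hMh a b, ← hsym hKh a b] at key
      constructor <;> linarith [key.1, key.2]
    have hMpos : ∀ v : Fin n → ℂ, v ≠ 0 → 0 < (sform Mc v v).re := fun v hv => by
      simpa [hz, hz'] using (hab 0 v (Or.inr hv)).1
    refine ⟨posDef_of_sform_pos hMsym hMpos, posDef_of_sform_pos hDsym fun v hv => ?_,
      posDef_of_sform_pos hKsym fun v hv => ?_, fun v hv => (hdisc v).2 ?_⟩
    · have h := (hab 0 v (Or.inr hv)).2
      simp only [hz', Complex.zero_re] at h
      have := mul_neg_of_neg_of_pos hγ (hMpos v hv)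
      change 0 < (sform Dc v v).re
      linarith
    · have h := (hab v 0 (Or.inl hv)).2
      simp only [hz, Complex.zero_re] at h
      have h' : γ * (sform Kc v v).re < 0 := by linarith
      exact (pos_iff_neg_of_mul_neg (mul_comm γ _ ▸ h')).2 hγ
    · -- At `b = γ a` the first form is `-a* L(γ) a`.
      have h := (hab v ((γ : ℂ) • v) (Or.inl hv)).1
      have hm := hMpos v hv
      simp only [sform_smul_left, sform_smul_right] at h
      simp at h
      have hL0 : γ ^ 2 * (sform Mc v v).re + γ * (sform Dc v v).re + (sform Kc v v).re < 0 := by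
        linarith
      have := mul_neg_of_neg_of_pos hL0 hm
      nlinarith [sq_nonneg (2 * γ * (sform Mc v v).re + (sform Dc v v).re)]
  · rintro ⟨hMp, hDp, hKp, hod⟩
    have hMpos : ∀ v : Fin n → ℂ, v ≠ 0 → 0 < (sform Mc v v).re := fun v => sform_map_pos hMp
    have hDpos : ∀ v : Fin n → ℂ, v ≠ 0 → 0 < (sform Dc v v).re := fun v => sform_map_pos hDp
    have hKpos : ∀ v : Fin n → ℂ, v ≠ 0 → 0 < (sform Kc v v).re := fun v => sform_map_pos hKp
    have hod' := fun v hv => (hdisc v).1 (hod v hv)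
    have heig : ∀ (l : ℂ) v, v ≠ 0 → Zc *ᵥ v = l • v → Xc *ᵥ v ≠ 0 ∧ l < 0 ∧
        l.re ^ 2 * (sform Mc (Xc *ᵥ v) (Xc *ᵥ v)).re + l.re * (sform Dc (Xc *ᵥ v) (Xc *ᵥ v)).re +
          (sform Kc (Xc *ᵥ v) (Xc *ᵥ v)).re = 0 ∧
        2 * l.re * (sform Mc (Xc *ᵥ v) (Xc *ᵥ v)).re + (sform Dc (Xc *ᵥ v) (Xc *ᵥ v)).re ≠ 0 ∧
        (sform Sc v v).re =
          2 * l.re * (sform Mc (Xc *ᵥ v) (Xc *ᵥ v)).re + (sform Dc (Xc *ᵥ v) (Xc *ᵥ v)).re := by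
      intro l v hv hZ
      have ha : Xc *ᵥ v ≠ 0 := fun h => hv (hinj v h (by rw [hZ, mulVec_smul, h, smul_zero]))
      have h := hLform (Xc *ᵥ v) v
      simp only [hZ, mulVec_smul, sform_smul_right] at h
      have h' : l ^ 2 * ((sform Mc (Xc *ᵥ v) (Xc *ᵥ v)).re : ℂ) +
          l * ((sform Dc (Xc *ᵥ v) (Xc *ᵥ v)).re : ℂ) +
          ((sform Kc (Xc *ᵥ v) (Xc *ᵥ v)).re : ℂ) = 0 := by
        rw [← hreal hMh, ← hreal hDh, ← hreal hKh]
        linear_combination h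
      obtain ⟨r1, r2, r3⟩ := overdamped_root (hMpos _ ha) (hDpos _ ha) (hKpos _ ha) (hod' _ ha) h'
      refine ⟨ha, r1, r2, r3, ?_⟩
      rw [hSform, hZ, mulVec_smul, sform_smul_right, sform_smul_left]
      simp [(Complex.neg_iff.1 r1).2]
      ring
    refine ⟨fun l ⟨v, hv, hZ⟩ => (heig l v hv hZ).2.1, fun v hv ⟨l, hZ⟩ h0 => ?_, ?_⟩
    · obtain ⟨-, -, -, hne, hS⟩ := heig l v hv hZ
      have h0' : sform Sc v v = 0 := h0
      rw [h0'] at hS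
      exact hne hS.symm
    · intro l μ v w hv hw hZv hZw hneg hpos
      obtain ⟨hx, hl, hfl, -, hSv⟩ := heig l v hv hZv
      obtain ⟨hy, hμ, hfμ, -, hSw⟩ := heig μ w hw hZw
      have hneg' : (sform Sc v v).re < 0 := (Complex.neg_iff.1 hneg).1
      have hpos' : 0 < (sform Sc w w).re := (Complex.pos_iff.1 hpos).1
      rw [hSv] at hneg'
      rw [hSw] at hpos'
      refine Complex.lt_def.2
        ⟨?_, (Complex.neg_iff.1 hl).2.trans (Complex.neg_iff.1 hμ).2.symm⟩
      by_contra! hle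
      set x := Xc *ᵥ v
      set y := Xc *ᵥ w
      have hm := hMpos y hy
      have hd : 0 ≤ (l.re - μ.re) * (sform Mc y y).re := mul_nonneg (by linarith) hm.le
      have hgy : 0 < 2 * l.re * (sform Mc y y).re + (sform Dc y y).re := by linarith
      have hfy : 0 ≤ l.re ^ 2 * (sform Mc y y).re + l.re * (sform Dc y y).re
          + (sform Kc y y).re := by
        have : 0 ≤ (l.re - μ.re) * (l.re * (sform Mc y y).re + μ.re * (sform Mc y y).re +
          (sform Dc y y).re) := mul_nonneg (by linarith) (by linarith)
        linarith
      -- Replacing `y` by `-y` makes the cross term `x* L(l) y` nonnegative.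
      rcases le_total 0 (l.re ^ 2 * (sform Mc x y).re + l.re * (sform Dc x y).re
          + (sform Kc x y).re) with hc | hc
      · exact no_sign_change hMh hDh hKh hMpos hod' l.re x y hfl.ge hfy hc hneg' hgy
      · have hn : ∀ (A : Matrix (Fin n) (Fin n) ℂ), sform A (-y) (-y) = sform A y y ∧
            sform A x (-y) = - sform A x y := fun A => by simp [sform, mulVec_neg]
        refine no_sign_change hMh hDh hKh hMpos hod' l.re x (-y) hfl.ge ?_ ?_ hneg' ?_
        · simpa only [hn] using hfy
        · simp only [hn, Complex.neg_re]; linarith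
        · simpa only [hn] using hgy
end

section
/- Preservation of real eigenvalues with sign separation under structured projection: Let S ∈ ℝ^{2n×2n} be symmetric with S = Uᵀ diag(−I_n, I_n) U for some U ∈ GL_{2n}(ℝ), and let A ∈ ℝ^{2n×2n} satisfy AᵀS = SA with complexification diagonalizable over ℂ. Suppose all eigenvalues of A are real and there exists α ∈ ℝ such that for every eigenvector v ∈ ℂ^{2n} of A at eigenvalue λ: if λ < α then v* S v < 0, and if λ ≥ α then v* S v > 0 (in particular every eigenvalue of negative type is strictly smaller than every eigenvalue of positive type). Let W, V ∈ ℝ^{2n×r} have rank r with r ≤ 2n, and let H ∈ ℝ^{r×r} be symmetric with H Wᵀ = Vᵀ S and Wᵀ V = I_r. If the complexification of Wᵀ A V is diagonalizable over ℂ, then every eigenvalue of Wᵀ A V is real, and whenever w, w′ ∈ ℂ^{r} are eigenvectors of Wᵀ A V at eigenvalues λ, μ with w* H w < 0 and w′* H w′ > 0, then λ < μ. -/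
/-!
Only finitely many eigenvalues of `A` occur, so the threshold `α` can be lowered to a real `β < α`
that is not an eigenvalue and still separates the two types: eigenvectors with eigenvalue below `β`
are `S`-negative, those with eigenvalue above `β` are `S`-positive. Eigenspaces of `A` for distinct
real eigenvalues are `S`-orthogonal, so decomposing `x` into eigenvectors `x_c` gives
`x* S (A - β) x = ∑ (c - β) x_c* S x_c`, and `S (A - β)` is positive definite
(`form_shift_pos`).

The relations `H Wᵀ = Vᵀ S` and `Wᵀ V = 1` yield `H (Wᵀ A V - β) = Vᵀ S (A - β) V`, which is again
positive definite since `V` is injective. Evaluated at an eigenvector `w` of `Wᵀ A V` at `lam`, this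
says `(lam - β) w* H w > 0`. As `w* H w` is real, `lam` is real, and `lam` lies below or above `β`
according to the sign of `w* H w`.
-/

open Matrix
open scoped ComplexOrder

/-- A real square matrix is diagonalizable over `ℂ` if its complexification is similar to
a diagonal matrix. -/
def IsDiagonalizableOverC {N : Type*} [Fintype N] [DecidableEq N]
    (A : Matrix N N ℝ) : Prop :=
  ∃ (P : Matrix N N ℂ) (d : N → ℂ),
    IsUnit P ∧ A.map Complex.ofReal = P * diagonal d * P⁻¹

/-- Eigenvectors of an `S`-self-adjoint matrix at distinct real eigenvalues are `S`-orthogonal. -/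
lemma eigenvectors_form_orthogonal {N : Type*} [Fintype N]
    (S A : Matrix N N ℂ) (hSA : Aᴴ * S = S * A) {a b : ℂ} (ha : a.im = 0) (hab : a ≠ b)
    {u v : N → ℂ} (hu : A *ᵥ u = a • u) (hv : A *ᵥ v = b • v) :
    star u ⬝ᵥ S *ᵥ v = 0 := by
  have h1 : star u ⬝ᵥ S *ᵥ (A *ᵥ v) = star (A *ᵥ u) ⬝ᵥ S *ᵥ v := by
    rw [star_mulVec, ← dotProduct_mulVec, mulVec_mulVec, mulVec_mulVec, hSA]
  have ha' : star a = a := Complex.conj_eq_iff_im.2 ha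
  rw [hu, hv, star_smul, ha', mulVec_smul, dotProduct_smul, smul_dotProduct, smul_eq_mul,
    smul_eq_mul] at h1
  have h2 : (a - b) * (star u ⬝ᵥ S *ᵥ v) = 0 := by linear_combination -h1
  exact (mul_eq_zero.1 h2).resolve_left (sub_ne_zero.2 hab)

/-- If `A` is diagonalizable and `S`-self-adjoint with real eigenvalues, and `x* S (A - β) x > 0`
holds on eigenvectors of `A`, then it holds for all nonzero `x`. -/
lemma form_shift_pos {N : Type*} [Fintype N] [DecidableEq N]
    (S A : Matrix N N ℂ) (hSA : Aᴴ * S = S * A) (P : Matrix N N ℂ) (d : N → ℂ)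
    (hP : IsUnit P) (hA : A = P * diagonal d * P⁻¹) (hd : ∀ i, (d i).im = 0) (β : ℂ)
    (hpos : ∀ (c : ℂ) (v : N → ℂ), v ≠ 0 → A *ᵥ v = c • v →
      0 < (c - β) * (star v ⬝ᵥ S *ᵥ v))
    (x : N → ℂ) (hx : x ≠ 0) :
    0 < star x ⬝ᵥ S *ᵥ (A *ᵥ x - β • x) := by
  have hdet : IsUnit P.det := (Matrix.isUnit_iff_isUnit_det P).1 hP
  have hAP : A * P = P * diagonal d := by
    rw [hA, Matrix.mul_assoc, Matrix.nonsing_inv_mul _ hdet, Matrix.mul_one]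
  set y : N → ℂ := P⁻¹ *ᵥ x with hy
  have hPy : P *ᵥ y = x := by
    rw [hy, mulVec_mulVec, Matrix.mul_nonsing_inv _ hdet, one_mulVec]
  -- `z c` is the component of `x` in the eigenspace of `A` at `c`
  let z : ℂ → N → ℂ := fun c => P *ᵥ (fun i => if d i = c then y i else 0)
  let s : Finset ℂ := Finset.univ.image d
  have hz : ∀ c, A *ᵥ z c = c • z c := by
    intro c
    simp only [z]
    rw [mulVec_mulVec, hAP, ← mulVec_mulVec, ← mulVec_smul]
    congr 1
    ext i
    by_cases h : d i = c <;> simp [mulVec_diagonal, h]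
  have hsum : ∑ c ∈ s, z c = x := by
    simp only [z]
    rw [← mulVec_sum, ← hPy]
    congr 1
    ext i
    simp [Finset.sum_apply, s]
  have hsre : ∀ c ∈ s, c.im = 0 := by
    intro c hc
    obtain ⟨i, -, rfl⟩ := Finset.mem_image.1 hc
    exact hd i
  have hshift : A *ᵥ x - β • x = ∑ c ∈ s, (c - β) • z c := by
    conv_lhs => rw [← hsum]
    rw [mulVec_sum, Finset.smul_sum, ← Finset.sum_sub_distrib]
    exact Finset.sum_congr rfl fun c _ => by rw [hz, sub_smul]
  have key : star x ⬝ᵥ S *ᵥ (A *ᵥ x - β • x)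
      = ∑ c ∈ s, (c - β) * (star (z c) ⬝ᵥ S *ᵥ z c) := by
    rw [hshift, mulVec_sum, dotProduct_sum]
    refine Finset.sum_congr rfl fun c hc => ?_
    rw [mulVec_smul, dotProduct_smul, smul_eq_mul]
    congr 1
    conv_lhs => rw [← hsum]
    rw [star_sum, sum_dotProduct]
    refine Finset.sum_eq_single c (fun b hb hbc => ?_) (fun h => absurd hc h)
    exact eigenvectors_form_orthogonal S A hSA (hsre b hb) hbc (hz b) (hz c)
  rw [key]
  refine Finset.sum_pos' (fun c _ => ?_) ?_
  · by_cases h : z c = 0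
    · simp [h]
    · exact (hpos c _ h (hz c)).le
  · by_contra hcon
    push Not at hcon
    apply hx
    rw [← hsum]
    refine Finset.sum_eq_zero fun c hc => ?_
    by_contra h
    exact hcon c hc (hpos c _ h (hz c))

/-- Below any `α` there is a `β` with none of finitely many given reals in `[β, α)`. -/
lemma exists_lowered_threshold {N : Type*} [Finite N] (d : N → ℝ) (α : ℝ) :
    ∃ β < α, ∀ i, d i < α → d i < β := by
  have h : ∀ᶠ β in nhdsWithin α (Set.Iio α), ∀ i, d i < α → d i < β := by
    rw [Filter.eventually_all]
    intro i
    by_cases hi : d i < α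
    · filter_upwards [Ioo_mem_nhdsLT hi] with β hβ _ using hβ.1
    · exact Filter.Eventually.of_forall fun β h => absurd h hi
  obtain ⟨β, h1, h2⟩ := (h.and self_mem_nhdsWithin).exists
  exact ⟨β, h2, h1⟩

/-- **Preservation of real eigenvalues with sign separation under structured
projection.** -/
theorem real_eigenvalue_separation_preserved_under_projection {n r : ℕ}
    (S A : Matrix (Fin n ⊕ Fin n) (Fin n ⊕ Fin n) ℝ)
    (hSsym : Sᵀ = S)
    (U : Matrix (Fin n ⊕ Fin n) (Fin n ⊕ Fin n) ℝ) (hU : IsUnit U)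
    (hSU : S = Uᵀ * fromBlocks (-1) 0 0 1 * U)
    (hSA : Aᵀ * S = S * A)
    (hdiag : IsDiagonalizableOverC A)
    -- all eigenvalues of A are real
    (hreal : ∀ lam : ℂ, (∃ v : Fin n ⊕ Fin n → ℂ, v ≠ 0 ∧
      (A.map Complex.ofReal).mulVec v = lam • v) → lam.im = 0)
    -- there is a threshold α separating the eigenvalues of negative and positive type
    (α : ℝ)
    (hsep : ∀ (lam : ℂ) (v : Fin n ⊕ Fin n → ℂ), v ≠ 0 →
      (A.map Complex.ofReal).mulVec v = lam • v →
      (lam < (α : ℂ) → star v ⬝ᵥ (S.map Complex.ofReal).mulVec v < 0) ∧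
      ((α : ℂ) ≤ lam → 0 < star v ⬝ᵥ (S.map Complex.ofReal).mulVec v))
    (hr : r ≤ 2 * n)
    (W V : Matrix (Fin n ⊕ Fin n) (Fin r) ℝ)
    (hWrank : W.rank = r) (hVrank : V.rank = r)
    (H : Matrix (Fin r) (Fin r) ℝ) (hHsym : Hᵀ = H)
    (hHW : H * Wᵀ = Vᵀ * S) (hWV : Wᵀ * V = 1)
    (hdiagred : IsDiagonalizableOverC (Wᵀ * A * V)) :
    -- every eigenvalue of Wᵀ A V is real
    (∀ lam : ℂ, (∃ w : Fin r → ℂ, w ≠ 0 ∧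
      ((Wᵀ * A * V).map Complex.ofReal).mulVec w = lam • w) → lam.im = 0) ∧
    -- the eigenvalues of negative type are smaller than those of positive type
    (∀ (lam μ : ℂ) (w w' : Fin r → ℂ), w ≠ 0 → w' ≠ 0 →
      ((Wᵀ * A * V).map Complex.ofReal).mulVec w = lam • w →
      ((Wᵀ * A * V).map Complex.ofReal).mulVec w' = μ • w' →
      star w ⬝ᵥ (H.map Complex.ofReal).mulVec w < 0 →
      0 < star w' ⬝ᵥ (H.map Complex.ofReal).mulVec w' →
      lam < μ) := by
  obtain ⟨P, d, hP, hA⟩ := hdiag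
  set Sc : Matrix (Fin n ⊕ Fin n) (Fin n ⊕ Fin n) ℂ := S.map Complex.ofReal with hSc
  set Ac : Matrix (Fin n ⊕ Fin n) (Fin n ⊕ Fin n) ℂ := A.map Complex.ofReal with hAc
  set Hc : Matrix (Fin r) (Fin r) ℂ := H.map Complex.ofReal with hHc
  let Vc : Matrix (Fin n ⊕ Fin n) (Fin r) ℂ := V.map Complex.ofReal
  let Wc : Matrix (Fin n ⊕ Fin n) (Fin r) ℂ := W.map Complex.ofReal
  have hconj : ∀ {k l : Type} (M : Matrix k l ℝ),
      (M.map Complex.ofReal)ᴴ = Mᵀ.map Complex.ofReal := by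
    intro k l M
    ext i j
    simp
  have hmul : ∀ {k l m : Type} [Fintype l] (M : Matrix k l ℝ) (M' : Matrix l m ℝ),
      (M * M').map Complex.ofReal = M.map Complex.ofReal * M'.map Complex.ofReal := by
    intro k l m _ M M'
    exact Matrix.map_mul (f := Complex.ofRealHom)
  have hSAc : Acᴴ * Sc = Sc * Ac := by
    rw [hAc, hconj, hSc, ← hmul, ← hmul, hSA]
  have hHherm : Hcᴴ = Hc := by rw [hHc, hconj, hHsym]
  have hHWc : Hc * Wcᴴ = Vcᴴ * Sc := by
    simp only [Wc, Vc, hHc, hSc]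
    rw [hconj, hconj, ← hmul, ← hmul, hHW]
  have hWVc : Wcᴴ * Vc = 1 := by
    simp only [Wc, Vc]
    rw [hconj, ← hmul, hWV]
    ext i j
    by_cases h : i = j <;> simp [Matrix.one_apply, h]
  have hred : (Wᵀ * A * V).map Complex.ofReal = Wcᴴ * Ac * Vc := by
    simp only [Wc, Vc]
    rw [hmul, hmul, hconj]
  rw [hred]
  have hd : ∀ i, (d i).im = 0 := by
    intro i
    have hdet : IsUnit P.det := (Matrix.isUnit_iff_isUnit_det P).1 hP
    refine hreal (d i) ⟨P *ᵥ Pi.single i 1, fun h0 => ?_, ?_⟩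
    · have h1 : P⁻¹ *ᵥ (P *ᵥ Pi.single i (1 : ℂ)) = 0 := by rw [h0, mulVec_zero]
      rw [mulVec_mulVec, Matrix.nonsing_inv_mul _ hdet, one_mulVec] at h1
      simpa using congrFun h1 i
    · change Ac *ᵥ _ = _
      rw [mulVec_mulVec, hA, Matrix.mul_assoc, Matrix.nonsing_inv_mul _ hdet, Matrix.mul_one,
        ← mulVec_mulVec, ← mulVec_smul]
      congr 1
      ext j
      by_cases h : j = i
      · subst h
        simp [mulVec_diagonal]
      · simp [mulVec_diagonal, h]
  obtain ⟨β, hβα, hβ⟩ := exists_lowered_threshold (fun i => (d i).re) α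
  -- every eigenvalue of `Ac` is one of the `d i`
  have heig : ∀ (c : ℂ) (v : Fin n ⊕ Fin n → ℂ), v ≠ 0 → Ac *ᵥ v = c • v → ∃ i, d i = c := by
    intro c v hv hcv
    have hdet : IsUnit P.det := (Matrix.isUnit_iff_isUnit_det P).1 hP
    by_contra hcon
    push Not at hcon
    apply hv
    have h1 : diagonal d *ᵥ (P⁻¹ *ᵥ v) = c • (P⁻¹ *ᵥ v) := by
      rw [← mulVec_smul, ← hcv, hA, mulVec_mulVec, mulVec_mulVec, ← Matrix.mul_assoc,
        ← Matrix.mul_assoc, Matrix.nonsing_inv_mul _ hdet, Matrix.one_mul]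
    have h2 : P⁻¹ *ᵥ v = 0 := by
      ext i
      have h3 := congrFun h1 i
      rw [mulVec_diagonal, Pi.smul_apply, smul_eq_mul] at h3
      have h4 : (d i - c) * (P⁻¹ *ᵥ v) i = 0 := by linear_combination h3
      exact (mul_eq_zero.1 h4).resolve_left (sub_ne_zero.2 (hcon i))
    rw [← one_mulVec v, ← Matrix.mul_nonsing_inv _ hdet, ← mulVec_mulVec, h2, mulVec_zero]
  have hpos : ∀ (c : ℂ) (v : Fin n ⊕ Fin n → ℂ), v ≠ 0 → Ac *ᵥ v = c • v →
      0 < (c - (β : ℂ)) * (star v ⬝ᵥ Sc *ᵥ v) := by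
    intro c v hv hcv
    obtain ⟨i, rfl⟩ := heig c v hv hcv
    obtain ⟨hneg, hposi⟩ := hsep (d i) v hv hcv
    by_cases h : (d i).re < α
    · refine mul_pos_of_neg_of_neg (sub_neg.2 ?_) (hneg ?_)
      · exact Complex.lt_def.2 ⟨hβ i h, by simp [hd i]⟩
      · exact Complex.lt_def.2 ⟨h, by simp [hd i]⟩
    · refine mul_pos (sub_pos.2 ?_) (hposi ?_)
      · exact Complex.lt_def.2 ⟨hβα.trans_le (not_lt.1 h), by simp [hd i]⟩
      · exact Complex.le_def.2 ⟨not_lt.1 h, by simp [hd i]⟩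
  have hform := form_shift_pos Sc Ac hSAc P d hP hA hd β hpos
  -- positive definiteness of `S (A - β)`, compressed along `V` to an eigenvector of `Wᵀ A V`
  have hmain : ∀ (lam : ℂ) (w : Fin r → ℂ), w ≠ 0 → (Wcᴴ * Ac * Vc) *ᵥ w = lam • w →
      0 < (lam - (β : ℂ)) * (star w ⬝ᵥ Hc *ᵥ w) := by
    intro lam w hw hlw
    have hVw : Vc *ᵥ w ≠ 0 := by
      intro h0
      apply hw
      rw [← one_mulVec w, ← hWVc, ← mulVec_mulVec, h0, mulVec_zero]
    have h1 := hform (Vc *ᵥ w) hVw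
    have h2 : Vcᴴ *ᵥ (Sc *ᵥ (Ac *ᵥ (Vc *ᵥ w) - (β : ℂ) • (Vc *ᵥ w)))
        = (lam - (β : ℂ)) • (Hc *ᵥ w) := by
      rw [mulVec_mulVec, ← hHWc, ← mulVec_mulVec, mulVec_sub, mulVec_smul, mulVec_mulVec w,
        mulVec_mulVec, mulVec_mulVec, hWVc, one_mulVec, ← Matrix.mul_assoc, hlw, ← sub_smul,
        mulVec_smul]
    rw [star_mulVec, ← dotProduct_mulVec, h2, dotProduct_smul, smul_eq_mul] at h1
    exact h1
  have him : ∀ w : Fin r → ℂ, (star w ⬝ᵥ Hc *ᵥ w).im = 0 := by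
    intro w
    refine Complex.conj_eq_iff_im.1 ?_
    change star (star w ⬝ᵥ Hc *ᵥ w) = _
    rw [← star_dotProduct, star_mulVec, hHherm, dotProduct_mulVec]
  have hlamreal : ∀ (lam : ℂ) (w : Fin r → ℂ), w ≠ 0 → (Wcᴴ * Ac * Vc) *ᵥ w = lam • w →
      lam.im = 0 := by
    intro lam w hw hlw
    have h := hmain lam w hw hlw
    have h0 := him w
    rw [Complex.lt_def] at h
    obtain ⟨h1, h2⟩ := h
    simp only [Complex.mul_re, Complex.mul_im, h0, Complex.sub_re, Complex.sub_im,
      Complex.ofReal_re, Complex.ofReal_im, Complex.zero_re, Complex.zero_im, mul_zero, sub_zero,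
      zero_add] at h1 h2
    rcases mul_eq_zero.1 h2.symm with h3 | h3
    · exact h3
    · rw [h3, mul_zero] at h1
      exact absurd h1 (lt_irrefl 0)
  refine ⟨fun lam ⟨w, hw, hlw⟩ => hlamreal lam w hw hlw, ?_⟩
  intro lam μ w w' hw hw' hlw hlw' hneg hposi
  have h1 := hmain lam w hw hlw
  have h2 := hmain μ w' hw' hlw'
  have i1 := hlamreal lam w hw hlw
  have i2 := hlamreal μ w' hw' hlw'
  have h3 : (lam - (β : ℂ)).re < 0 := by
    have h := (Complex.lt_def.1 h1).1
    rw [Complex.mul_re, him w, mul_zero, sub_zero] at h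
    exact neg_of_mul_pos_left h (Complex.lt_def.1 hneg).1.le
  have h4 : 0 < (μ - (β : ℂ)).re := by
    have h := (Complex.lt_def.1 h2).1
    rw [Complex.mul_re, him w', mul_zero, sub_zero] at h
    exact pos_of_mul_pos_left h (Complex.lt_def.1 hposi).1.le
  rw [Complex.sub_re, Complex.ofReal_re] at h3 h4
  exact Complex.lt_def.2 ⟨by linarith, by rw [i1, i2]⟩
end
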